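/- arXiv:2303.15031 — 6 statements merged into one kernel-verified Lean document; each statement's English description precedes it below -/
import Mathlib

section
/- Let A be a type and let f : A → A → A be a choice function for pairs, i.e. f a b ∈ {a, b} and f a b = f b a for all a, b ∈ A (hence f a a = a). Then f is associative — f (f a b) c = f a (f b c) for all a, b, c ∈ A — if and only if there exists a linear order on A such that f a b = min(a, b) for all a, b ∈ A. -/
/-- **Associative choice functions are exactly minima of linear orders.**
Let `A` be a type and `f : A → A → A` a choice function for pairs, i.e.
`f a b ∈ {a, b}` and `f a b = f b a` for all `a b : A`.  Then `f` is associative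
if and only if there is a linear order on `A` with `f a b = min a b` for all `a b`. -/
theorem associative_choice_iff_min_of_linearOrder {A : Type*} (f : A → A → A)
    (hchoice : ∀ a b : A, f a b = a ∨ f a b = b)
    (hcomm : ∀ a b : A, f a b = f b a) :
    (∀ a b c : A, f (f a b) c = f a (f b c)) ↔
      ∃ inst : LinearOrder A, ∀ a b : A, f a b = @Min.min A inst.toMin a b := by
  constructor
  · intro hassoc
    classical
    let inst : LinearOrder A :=
      { le := fun a b => f a b = a
        le_refl := fun a => by
          rcases hchoice a a with h | h <;> exact h
        le_trans := fun a b c (hab : f a b = a) (hbc : f b c = b) => by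
          change f a c = a
          have h := hassoc a b c
          rw [hab, hbc, hab] at h
          exact h
        le_antisymm := fun a b (hab : f a b = a) (hba : f b a = b) => by
          rw [← hab, hcomm, hba]
        le_total := fun a b => by
          change f a b = a ∨ f b a = b
          rw [hcomm b a]
          exact hchoice a b
        toDecidableLE := fun a b => Classical.propDecidable _ }
    refine ⟨inst, fun a b => ?_⟩
    rcases hchoice a b with h | h
    · have hle : inst.le a b := h
      rw [h]
      exact (min_eq_left hle).symm
    · have hle : inst.le b a := (hcomm b a).trans h
      rw [h]
      exact (min_eq_right hle).symm
  · rintro ⟨inst, h⟩ a b c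
    simp only [h]
    exact min_assoc a b c
end

section
/- Let L be a first-order language, let t₁, t₂ be closed L-terms, and let α(v) be an L-formula in one free variable such that both α(t₁) ∧ ¬α(t₂) and ¬α(t₁) ∧ α(t₂) are satisfiable (each holds in some L-structure). Then for every choice function f on the set of L-formulas (f φ ψ ∈ {φ, ψ} and f φ ψ = f ψ φ) there exist an L-structure M and an ordering (s₁, s₂) of the pair (t₁, t₂) — i.e. (s₁, s₂) = (t₁, t₂) or (s₁, s₂) = (t₂, t₁) — such that M satisfies the sentence ∀v₁∀v₂ (v₁ = s₁ ∧ v₂ = s₂ → χ(v₁, v₂)) but M does not satisfy the sentence (s₁ = s₁ ∧ s₂ = s₂ → χ'), where χ(v₁, v₂) := f (α(v₁)) (α(v₂)) (the formula chosen by f from the pair {α(v₁), α(v₂)}, with v₁, v₂ distinct variables) and χ' := f (α(s₁)) (α(s₂)). This expresses that under formula choice semantics the Universal Instantiation scheme ∀v₁∀v₂ ψ(v₁, v₂) → ψ(s₁, s₂) fails in ⟨M, f⟩ for ψ(v₁, v₂) := (v₁ = s₁ ∧ v₂ = s₂ → α(v₁)|α(v₂)). -/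
open FirstOrder Language

/-- A bundled nonempty `L`-structure. -/
structure LStruct (L : Language) where
  Carrier : Type
  [struc : L.Structure Carrier]
  [nonemp : Nonempty Carrier]

attribute [instance] LStruct.struc LStruct.nonemp

instance {L : Language} : CoeSort (LStruct L) Type := ⟨LStruct.Carrier⟩

theorem realize_substc {L : Language} (M : LStruct L) (α : L.Formula (Fin 1)) (t : L.Term Empty)
    (v : ℕ → M.Carrier) :
    Formula.Realize (α.subst fun _ => (t.relabel Empty.elim : L.Term ℕ)) v ↔
      M.Carrier ⊨ (α.subst fun _ => t : L.Sentence) := by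
  have e : (v ∘ (Empty.elim : Empty → ℕ)) = (default : Empty → M.Carrier) :=
    Subsingleton.elim _ _
  unfold Sentence.Realize Formula.Realize
  rw [BoundedFormula.realize_subst, BoundedFormula.realize_subst]
  simp only [Term.realize_relabel, e]

theorem realize_substv {L : Language} (M : LStruct L) (α : L.Formula (Fin 1)) (t : L.Term Empty)
    (v : ℕ → M.Carrier) (n : ℕ)
    (h : v n = (t.relabel Empty.elim : L.Term ℕ).realize v) :
    Formula.Realize (α.subst fun _ => (Term.var n : L.Term ℕ)) v ↔
      M.Carrier ⊨ (α.subst fun _ => t : L.Sentence) := by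
  rw [← realize_substc M α t v]
  unfold Formula.Realize
  rw [BoundedFormula.realize_subst, BoundedFormula.realize_subst]
  simp only [Term.realize_var, h]

theorem ui_aux {L : Language} (M : LStruct L)
    (a b : L.Term Empty) (α : L.Formula (Fin 1))
    (ha : M.Carrier ⊨ (α.subst fun _ => a : L.Sentence))
    (hb : ¬ M.Carrier ⊨ (α.subst fun _ => b : L.Sentence))
    (f : L.Formula ℕ → L.Formula ℕ → L.Formula ℕ)
    (hchoice : ∀ φ ψ : L.Formula ℕ, f φ ψ = φ ∨ f φ ψ = ψ)
    (hcomm : ∀ φ ψ : L.Formula ℕ, f φ ψ = f ψ φ)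
    (hf : f (α.subst fun _ => a.relabel Empty.elim) (α.subst fun _ => b.relabel Empty.elim)
      = (α.subst fun _ => b.relabel Empty.elim)) :
    ∃ (s₁ s₂ : L.Term Empty),
      ((s₁, s₂) = (a, b) ∨ (s₁, s₂) = (b, a)) ∧
      (∀ v : ℕ → M.Carrier,
        Formula.Realize
          ((Term.equal (Term.var 0) (s₁.relabel Empty.elim) ⊓
              Term.equal (Term.var 1) (s₂.relabel Empty.elim)) ⟹
            f (α.subst fun _ => Term.var 0) (α.subst fun _ => Term.var 1)) v) ∧
      ¬ (∀ v : ℕ → M.Carrier,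
        Formula.Realize
          ((Term.equal (s₁.relabel Empty.elim) (s₁.relabel Empty.elim) ⊓
              Term.equal (s₂.relabel Empty.elim) (s₂.relabel Empty.elim)) ⟹
            f (α.subst fun _ => s₁.relabel Empty.elim)
              (α.subst fun _ => s₂.relabel Empty.elim)) v) := by
  obtain ⟨v₀⟩ : Nonempty (ℕ → M.Carrier) := inferInstance
  rcases hchoice (α.subst fun _ => Term.var 0) (α.subst fun _ => Term.var 1) with h | h
  · refine ⟨a, b, Or.inl rfl, ?_, ?_⟩
    · intro v
      rw [h, Formula.realize_imp, Formula.realize_inf, Formula.realize_equal,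
        Formula.realize_equal]
      rintro ⟨h0, -⟩
      exact (realize_substv M α a v 0 h0).2 ha
    · intro H
      have := H v₀
      rw [hf, Formula.realize_imp, Formula.realize_inf, Formula.realize_equal,
        Formula.realize_equal] at this
      exact hb ((realize_substc M α b v₀).1 (this ⟨rfl, rfl⟩))
  · refine ⟨b, a, Or.inr rfl, ?_, ?_⟩
    · intro v
      rw [h, Formula.realize_imp, Formula.realize_inf, Formula.realize_equal,
        Formula.realize_equal]
      rintro ⟨-, h1⟩
      exact (realize_substv M α a v 1 h1).2 ha
    · intro H
      have := H v₀
      rw [hcomm, hf, Formula.realize_imp, Formula.realize_inf, Formula.realize_equal,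
        Formula.realize_equal] at this
      exact hb ((realize_substc M α b v₀).1 (this ⟨rfl, rfl⟩))

/-- **Failure of Universal Instantiation under formula choice semantics.**
Let `t₁, t₂` be closed `L`-terms and `α` an `L`-formula in one free variable such that
both `α(t₁) ∧ ¬α(t₂)` and `¬α(t₁) ∧ α(t₂)` are satisfiable.  Then for every choice
function `f` on `L`-formulas there are an `L`-structure `M` and an ordering `(s₁, s₂)`
of `(t₁, t₂)` such that `M` satisfies `∀v₁∀v₂ (v₁ = s₁ ∧ v₂ = s₂ → χ(v₁,v₂))` but not
`(s₁ = s₁ ∧ s₂ = s₂ → χ')`, where `χ(v₁,v₂) := f (α(v₁)) (α(v₂))` and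
`χ' := f (α(s₁)) (α(s₂))`. -/
theorem universal_instantiation_fails (L : Language)
    (t₁ t₂ : L.Term Empty) (α : L.Formula (Fin 1))
    (hsat₁ : ∃ M : LStruct L,
      M.Carrier ⊨ ((α.subst fun _ => t₁) ⊓ ∼(α.subst fun _ => t₂) : L.Sentence))
    (hsat₂ : ∃ M : LStruct L,
      M.Carrier ⊨ (∼(α.subst fun _ => t₁) ⊓ (α.subst fun _ => t₂) : L.Sentence))
    (f : L.Formula ℕ → L.Formula ℕ → L.Formula ℕ)
    (hchoice : ∀ φ ψ : L.Formula ℕ, f φ ψ = φ ∨ f φ ψ = ψ)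
    (hcomm : ∀ φ ψ : L.Formula ℕ, f φ ψ = f ψ φ) :
    ∃ (M : LStruct L) (s₁ s₂ : L.Term Empty),
      ((s₁, s₂) = (t₁, t₂) ∨ (s₁, s₂) = (t₂, t₁)) ∧
      (∀ v : ℕ → M.Carrier,
        Formula.Realize
          ((Term.equal (Term.var 0) (s₁.relabel Empty.elim) ⊓
              Term.equal (Term.var 1) (s₂.relabel Empty.elim)) ⟹
            f (α.subst fun _ => Term.var 0) (α.subst fun _ => Term.var 1)) v) ∧
      ¬ (∀ v : ℕ → M.Carrier,
        Formula.Realize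
          ((Term.equal (s₁.relabel Empty.elim) (s₁.relabel Empty.elim) ⊓
              Term.equal (s₂.relabel Empty.elim) (s₂.relabel Empty.elim)) ⟹
            f (α.subst fun _ => s₁.relabel Empty.elim)
              (α.subst fun _ => s₂.relabel Empty.elim)) v) := by
  obtain ⟨M₁, h₁⟩ := hsat₁
  obtain ⟨M₂, h₂⟩ := hsat₂
  have h₁ := Formula.realize_inf.1 h₁
  have h₂ := Formula.realize_inf.1 h₂
  rcases hchoice (α.subst fun _ => t₁.relabel Empty.elim)
    (α.subst fun _ => t₂.relabel Empty.elim) with h | h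
  · obtain ⟨s₁, s₂, hs, h'⟩ := ui_aux M₂ t₂ t₁ α h₂.2 (Formula.realize_not.1 h₂.1) f hchoice
      hcomm (by rw [hcomm]; exact h)
    exact ⟨M₂, s₁, s₂, hs.symm, h'⟩
  · obtain ⟨s₁, s₂, hs, h'⟩ := ui_aux M₁ t₁ t₂ α h₁.1 (Formula.realize_not.1 h₁.2) f hchoice
      hcomm h
    exact ⟨M₁, s₁, s₂, hs, h'⟩
end

section
/- Let L be a first-order language, let t₁, t₂ be closed L-terms, and let α(v) be an L-formula in one free variable such that both α(t₁) ∧ ¬α(t₂) and ¬α(t₁) ∧ α(t₂) are satisfiable. Then for every choice function f on the set of L-formulas (f φ ψ ∈ {φ, ψ} and f φ ψ = f ψ φ) the Existential Generalization scheme φ(t) → ∃v φ(v) fails under formula choice semantics: there exist an L-structure M and an ordering (s₁, s₂) of (t₁, t₂) such that M satisfies the sentence ¬(s₁ = s₁ ∧ s₂ = s₂ → χ') and M satisfies the sentence ¬∃v₁∃v₂ ¬(v₁ = s₁ ∧ v₂ = s₂ → χ(v₁, v₂)), where χ(v₁, v₂) := f (α(v₁)) (α(v₂)) (with v₁, v₂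 distinct variables) and χ' := f (α(s₁)) (α(s₂)). -/
open FirstOrder Language

/-- Realizing a substituted closed term. -/
theorem realize_subst_closed {L : Language} {M : Type} [L.Structure M]
    (t : L.Term Empty) (α : L.Formula (Fin 1)) (v : ℕ → M) :
    Formula.Realize (α.subst fun _ => (t.relabel Empty.elim : L.Term ℕ)) v ↔
      M ⊨ (α.subst fun _ => t : L.Sentence) := by
  unfold Sentence.Realize Formula.Realize
  rw [BoundedFormula.realize_subst, BoundedFormula.realize_subst]
  simp only [Term.realize_relabel]
  have h : v ∘ (Empty.elim : Empty → ℕ) = default := Subsingleton.elim _ _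
  rw [h]

theorem realize_subst_var {L : Language} {M : Type} [L.Structure M]
    (t : L.Term Empty) (α : L.Formula (Fin 1)) (v : ℕ → M) (n : ℕ)
    (hn : v n = (t.relabel Empty.elim : L.Term ℕ).realize v) :
    Formula.Realize (α.subst fun _ => (Term.var n : L.Term ℕ)) v ↔
      M ⊨ (α.subst fun _ => t : L.Sentence) := by
  rw [← realize_subst_closed t α v]
  unfold Formula.Realize
  rw [BoundedFormula.realize_subst, BoundedFormula.realize_subst]
  simp only [Term.realize_var, hn]

/-- **Failure of Existential Generalization under formula choice semantics.**
Let `t₁, t₂` be closed `L`-terms and `α` an `L`-formula in one free variable such that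
both `α(t₁) ∧ ¬α(t₂)` and `¬α(t₁) ∧ α(t₂)` are satisfiable.  Then for every choice
function `f` on `L`-formulas there are an `L`-structure `M` and an ordering `(s₁, s₂)`
of `(t₁, t₂)` such that `M` satisfies `¬(s₁ = s₁ ∧ s₂ = s₂ → χ')` and `M` satisfies
`¬∃v₁∃v₂ ¬(v₁ = s₁ ∧ v₂ = s₂ → χ(v₁,v₂))`, where `χ(v₁,v₂) := f (α(v₁)) (α(v₂))` and
`χ' := f (α(s₁)) (α(s₂))`. -/
theorem existential_generalization_fails (L : Language)
    (t₁ t₂ : L.Term Empty) (α : L.Formula (Fin 1))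
    (hsat₁ : ∃ M : LStruct L,
      M.Carrier ⊨ ((α.subst fun _ => t₁) ⊓ ∼(α.subst fun _ => t₂) : L.Sentence))
    (hsat₂ : ∃ M : LStruct L,
      M.Carrier ⊨ (∼(α.subst fun _ => t₁) ⊓ (α.subst fun _ => t₂) : L.Sentence))
    (f : L.Formula ℕ → L.Formula ℕ → L.Formula ℕ)
    (hchoice : ∀ φ ψ : L.Formula ℕ, f φ ψ = φ ∨ f φ ψ = ψ)
    (hcomm : ∀ φ ψ : L.Formula ℕ, f φ ψ = f ψ φ) :
    ∃ (M : LStruct L) (s₁ s₂ : L.Term Empty),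
      ((s₁, s₂) = (t₁, t₂) ∨ (s₁, s₂) = (t₂, t₁)) ∧
      (∀ v : ℕ → M.Carrier,
        Formula.Realize
          (∼((Term.equal (s₁.relabel Empty.elim) (s₁.relabel Empty.elim) ⊓
                Term.equal (s₂.relabel Empty.elim) (s₂.relabel Empty.elim)) ⟹
              f (α.subst fun _ => s₁.relabel Empty.elim)
                (α.subst fun _ => s₂.relabel Empty.elim))) v) ∧
      ¬ (∃ v : ℕ → M.Carrier,
          Formula.Realize
            (∼((Term.equal (Term.var 0) (s₁.relabel Empty.elim) ⊓
                  Term.equal (Term.var 1) (s₂.relabel Empty.elim)) ⟹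
                f (α.subst fun _ => Term.var 0) (α.subst fun _ => Term.var 1))) v) := by
  obtain ⟨M₁, h₁⟩ := hsat₁
  obtain ⟨M₂, h₂⟩ := hsat₂
  have h₁' : M₁.Carrier ⊨ (α.subst fun _ => t₁ : L.Sentence) ∧
      ¬ M₁.Carrier ⊨ (α.subst fun _ => t₂ : L.Sentence) := by
    simpa [Sentence.Realize, Formula.realize_inf, Formula.realize_not] using h₁
  have h₂' : ¬ M₂.Carrier ⊨ (α.subst fun _ => t₁ : L.Sentence) ∧
      M₂.Carrier ⊨ (α.subst fun _ => t₂ : L.Sentence) := by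
    simpa [Sentence.Realize, Formula.realize_inf, Formula.realize_not] using h₂
  obtain ⟨a1, a2⟩ := h₁'
  obtain ⟨b1, b2⟩ := h₂'
  rcases hchoice (α.subst fun _ => Term.var 0) (α.subst fun _ => Term.var 1) with hx | hx <;>
  rcases hchoice (α.subst fun _ => t₁.relabel Empty.elim)
    (α.subst fun _ => t₂.relabel Empty.elim) with hc | hc
  · refine ⟨M₂, t₂, t₁, Or.inr rfl, fun v => ?_, ?_⟩
    · rw [hcomm, hc]
      simpa [Formula.realize_not, Formula.realize_imp, realize_subst_closed] using b1
    · rw [hx]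
      rintro ⟨v, hv⟩
      simp only [Formula.realize_not, Formula.realize_imp, Formula.realize_inf,
        Formula.realize_equal] at hv
      exact hv fun h => (realize_subst_var t₂ α v 0 h.1).2 b2
  · refine ⟨M₁, t₁, t₂, Or.inl rfl, fun v => ?_, ?_⟩
    · rw [hc]
      simpa [Formula.realize_not, Formula.realize_imp, realize_subst_closed] using a2
    · rw [hx]
      rintro ⟨v, hv⟩
      simp only [Formula.realize_not, Formula.realize_imp, Formula.realize_inf,
        Formula.realize_equal] at hv
      exact hv fun h => (realize_subst_var t₁ α v 0 h.1).2 a1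
  · refine ⟨M₂, t₁, t₂, Or.inl rfl, fun v => ?_, ?_⟩
    · rw [hc]
      simpa [Formula.realize_not, Formula.realize_imp, realize_subst_closed] using b1
    · rw [hx]
      rintro ⟨v, hv⟩
      simp only [Formula.realize_not, Formula.realize_imp, Formula.realize_inf,
        Formula.realize_equal] at hv
      exact hv fun h => (realize_subst_var t₂ α v 1 h.2).2 b2
  · refine ⟨M₁, t₂, t₁, Or.inr rfl, fun v => ?_, ?_⟩
    · rw [hcomm, hc]
      simpa [Formula.realize_not, Formula.realize_imp, realize_subst_closed] using a2
    · rw [hx]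
      rintro ⟨v, hv⟩
      simp only [Formula.realize_not, Formula.realize_imp, Formula.realize_inf,
        Formula.realize_equal] at hv
      exact hv fun h => (realize_subst_var t₁ α v 1 h.2).2 a1
end

section
/- Let L be a first-order language, M an L-structure, and a, b two distinct elements of M. Let L(M) be the language L augmented with a constant symbol for each element of M, and regard M as an L(M)-structure in the canonical way. Then there exists a choice function f on the set of L(M)-sentences (f σ τ ∈ {σ, τ} and f σ τ = f τ σ) such that there is exactly one x ∈ M for which M satisfies the sentence f((x = a), (x = b)), where x, a, b denote the corresponding constant symbols. Under the sentence choice semantics for first-order superposition logic this says that ⟨M, f⟩ satisfies (∃! v)((v = a)|(v = b)). -/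
open FirstOrder Language

theorem exists_sym_choice (α : Type*) :
    ∃ g : α → α → α, (∀ x y, g x y = x ∨ g x y = y) ∧ (∀ x y, g x y = g y x) := by
  classical
  let _ : LinearOrder α := linearOrderOfSTO WellOrderingRel
  exact ⟨min, min_choice, min_comm⟩

/-- **Superposed objects are realizable for some choice function.**
Let `M` be an `L`-structure and `a ≠ b` elements of `M`.  Then there is a choice
function `f` on the sentences of `L(M)` (the language `L` with a constant for each
element of `M`) such that exactly one `x ∈ M` satisfies the collapsed sentence
`f((x = a), (x = b))`; i.e. `⟨M, f⟩` satisfies `(∃! v)((v = a)|(v = b))` under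
sentence choice semantics. -/
theorem exists_choice_function_unique_superposition (L : Language) (M : Type*)
    [L.Structure M] (a b : M) (hab : a ≠ b) :
    ∃ f : L[[M]].Sentence → L[[M]].Sentence → L[[M]].Sentence,
      (∀ σ τ : L[[M]].Sentence, f σ τ = σ ∨ f σ τ = τ) ∧
      (∀ σ τ : L[[M]].Sentence, f σ τ = f τ σ) ∧
      (∃! x : M,
        M ⊨ f (Term.equal (Constants.term (L.con x)) (Constants.term (L.con a)))
              (Term.equal (Constants.term (L.con x)) (Constants.term (L.con b)))) := by
  classical
  have key : ∀ x y : M,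
      (Term.equal (Constants.term (L.con x)) (Constants.term (L.con b)) : L[[M]].Sentence) ≠
        Term.equal (Constants.term (L.con y)) (Constants.term (L.con a)) := by
    intro x y h
    simp only [Term.equal, Term.bdEqual, Constants.term, Term.relabel] at h
    injection h with _ _ h
    injection h with _ h'
    apply hab
    injection h' with h'
    exact h'.symm
  let S : Set L[[M]].Sentence :=
    {σ | ∃ x : M, σ = Term.equal (Constants.term (L.con x)) (Constants.term (L.con a))}
  obtain ⟨g, hg1, hg2⟩ := exists_sym_choice L[[M]].Sentence
  refine ⟨fun σ τ => if σ ∈ S ∧ τ ∉ S then σ else if τ ∈ S ∧ σ ∉ S then τ else g σ τ,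
    ?_, ?_, a, ?_, ?_⟩
  · intro σ τ
    dsimp only
    split_ifs
    · exact Or.inl rfl
    · exact Or.inr rfl
    · exact hg1 σ τ
  · intro σ τ
    dsimp only
    by_cases h1 : σ ∈ S <;> by_cases h2 : τ ∈ S <;> simp [h1, h2, hg2 σ τ]
  · dsimp only
    rw [if_pos ⟨⟨a, rfl⟩, fun ⟨y, hy⟩ => key _ _ hy⟩]
    simp [Sentence.Realize]
  · intro x hx
    dsimp only at hx
    rw [if_pos ⟨⟨x, rfl⟩, fun ⟨y, hy⟩ => key _ _ hy⟩] at hx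
    have hx' : ((L.con x : L[[M]].Constants) : M) = ((L.con a : L[[M]].Constants) : M) := by
      simpa [Sentence.Realize] using hx
    exact hx'
end

section
/- Let L be a first-order language, M an L-structure, and a, b two distinct elements of M. Let L(M) be the language L augmented with a constant symbol for each element of M, and regard M as an L(M)-structure in the canonical way. Then for every choice function f on the set of L(M)-sentences (f σ τ ∈ {σ, τ} and f σ τ = f τ σ) that is regular — i.e. whenever σ and σ' are semantically equivalent L(M)-sentences, f σ τ is semantically equivalent to f σ' τ — it is NOT the case that there is exactly one x ∈ M for which M satisfies the sentence f((x = a), (x = b)) (where x, a, b denote the corresponding constant symbols). Hence no regular choice function f makes ⟨M, f⟩ satisfy (∃! v)((v = a)|(v = b)) under sentence choice semantics. -/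
open FirstOrder Language

universe w

/-- Two sentences of a language `L'` are semantically equivalent if they are true in
exactly the same (nonempty) `L'`-structures. -/
def SenEquiv (L' : Language) (σ τ : L'.Sentence) : Prop :=
  ∀ (N : Type w) [L'.Structure N] [Nonempty N], (N ⊨ σ ↔ N ⊨ τ)

/-- **No regular choice function realizes a unique superposed object.**
Let `M` be an `L`-structure and `a ≠ b` elements of `M`.  Then for every choice
function `f` on the sentences of `L(M)` that is *regular* (semantically equivalent
first arguments yield semantically equivalent values), it is not the case that there
is exactly one `x ∈ M` satisfying the collapsed sentence `f((x = a), (x = b))`;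
i.e. no regular `f` makes `⟨M, f⟩` satisfy `(∃! v)((v = a)|(v = b))` under sentence
choice semantics. -/
theorem no_regular_choice_function_unique_superposition (L : Language) (M : Type w)
    [L.Structure M] (a b : M) (hab : a ≠ b)
    (f : L[[M]].Sentence → L[[M]].Sentence → L[[M]].Sentence)
    (hchoice : ∀ σ τ : L[[M]].Sentence, f σ τ = σ ∨ f σ τ = τ)
    (hcomm : ∀ σ τ : L[[M]].Sentence, f σ τ = f τ σ)
    (hreg : ∀ σ σ' τ : L[[M]].Sentence,
      SenEquiv.{w} (L[[M]]) σ σ' → SenEquiv.{w} (L[[M]]) (f σ τ) (f σ' τ)) :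
    ¬ (∃! x : M,
        M ⊨ f (Term.equal (Constants.term (L.con x)) (Constants.term (L.con a)))
              (Term.equal (Constants.term (L.con x)) (Constants.term (L.con b)))) := by
  have key : ∀ (N : Type w) [L[[M]].Structure N] (x y : M),
      (N ⊨ (Term.equal (Constants.term (L.con x)) (Constants.term (L.con y)) :
        L[[M]].Sentence)) ↔ ((L.con x : L[[M]].Constants) : N) = (L.con y : L[[M]].Constants) := by
    intro N _ x y
    simp [Sentence.Realize, Formula.realize_equal, Term.realize_constants]
  have keyM : ∀ x y : M,
      (M ⊨ (Term.equal (Constants.term (L.con x)) (Constants.term (L.con y)) :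
        L[[M]].Sentence)) ↔ x = y := by
    intro x y
    rw [key]
    exact Iff.rfl
  have : Nonempty M := ⟨a⟩
  have h1 := hreg (Term.equal (Constants.term (L.con a)) (Constants.term (L.con a)))
    (Term.equal (Constants.term (L.con b)) (Constants.term (L.con b)))
    (Term.equal (Constants.term (L.con a)) (Constants.term (L.con b)))
    (by intro N _ _; rw [key, key]; simp) M
  have h2 := hreg (Term.equal (Constants.term (L.con a)) (Constants.term (L.con b)))
    (Term.equal (Constants.term (L.con b)) (Constants.term (L.con a)))
    (Term.equal (Constants.term (L.con b)) (Constants.term (L.con b)))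
    (by intro N _ _; rw [key, key]; exact eq_comm) M
  rw [hcomm (Term.equal (Constants.term (L.con b)) (Constants.term (L.con b)))] at h1
  have h3 := h1.trans h2
  rintro ⟨x, hx, hu⟩
  have hx' : x = a ∨ x = b := by
    rcases hchoice (Term.equal (Constants.term (L.con x)) (Constants.term (L.con a)))
      (Term.equal (Constants.term (L.con x)) (Constants.term (L.con b))) with h | h
    · left
      beta_reduce at hx
      rw [h, keyM] at hx
      exact hx
    · right
      beta_reduce at hx
      rw [h, keyM] at hx
      exact hx
  rcases hx' with rfl | rfl
  · exact hab (hu b (h3.1 hx)).symm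
  · exact hab (hu a (h3.2 hx))
end

section
/- For every type A and every equivalence relation ≈ on A, there exists a choice function f on A (f a b ∈ {a, b} and f a b = f b a for all a, b ∈ A) that is regular with respect to ≈: for all a, a', b ∈ A, if a ≈ a' then f a b ≈ f a' b. (Such an f may be obtained by fixing a representative of each ≈-class, choosing on pairs of representatives, and transferring the choice to arbitrary pairs; this construction underlies the completeness proof for the regular-choice-function semantics.) -/
/-- For every type `A` and every equivalence relation `≈` on `A` there is a choice
function `f` on `A` (`f a b ∈ {a, b}`, `f a b = f b a`) that is *regular* with respect
to `≈`: `a ≈ a'` implies `f a b ≈ f a' b`. -/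
theorem exists_regular_choice_function {A : Type*} (r : A → A → Prop)
    (hr : Equivalence r) :
    ∃ f : A → A → A,
      (∀ a b : A, f a b = a ∨ f a b = b) ∧
      (∀ a b : A, f a b = f b a) ∧
      (∀ a a' b : A, r a a' → r (f a b) (f a' b)) := by
  classical
  -- an abstract quotient, so that no order instance on `Quotient` interferes
  obtain ⟨Q, q, hq⟩ : ∃ (Q : Type _) (q : A → Q), ∀ a b, q a = q b ↔ r a b :=
    ⟨Quotient (⟨r, hr⟩ : Setoid A), fun a => Quotient.mk _ a, fun a b => Quotient.eq⟩
  let _ : LinearOrder A := linearOrderOfSTO WellOrderingRel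
  let _ : LinearOrder Q := linearOrderOfSTO WellOrderingRel
  let f : A → A → A := fun a b => if q a < q b then a else if q b < q a then b else min a b
  have hf : ∀ a b, f a b = a ∨ f a b = b := by
    intro a b
    simp only [f]
    split_ifs
    · exact Or.inl rfl
    · exact Or.inr rfl
    · exact min_choice a b
  -- the class of the chosen element is the smaller of the two classes
  have hm : ∀ a b, q (f a b) = min (q a) (q b) := by
    intro a b
    by_cases h1 : q a < q b
    · simp [f, h1, h1.le]
    · by_cases h2 : q b < q a
      · simp [f, h1, h2, h2.le]
      · have h : q a = q b := le_antisymm (not_lt.mp h2) (not_lt.mp h1)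
        rcases hf a b with e | e <;> rw [e] <;> simp [h]
  refine ⟨f, hf, ?_, ?_⟩
  · intro a b
    simp only [f]
    split_ifs with h1 h2
    · exact absurd h1 (lt_asymm h2)
    · rfl
    · rfl
    · exact min_comm a b
  · intro a a' b h
    rw [← hq] at h ⊢
    rw [hm, hm, h]
end
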